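/- Fix constants δ₀, ρ̃₀ ∈ (0,1) and set α̃₀ = (1−ρ̃₀)(1−δ₀)²/ρ̃₀ and β̃₀ = (1−ρ̃₀)(1−δ₀)/ρ̃₀. Then there exists a constant C > 0 depending only on (δ₀, ρ̃₀) such that for every n, every centered Gaussian vector X = (X_1,…,X_n) with var(X_i) = 1 for all i and correlation matrix R, and every subset J ⊂ {1,…,n} of cardinality ñ ≥ 2 with R_{ij} ≤ ρ̃₀ for all distinct i, j ∈ J, one has P(max_{1≤i≤n} X_i ≤ δ₀ √(2(1−ρ̃₀)log ñ)) ≤ C · ñ^{−α̃₀} · (log ñ)^{(β̃₀−1)/2}. -/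

import Mathlib

open MeasureTheory ProbabilityTheory Real

/-- `X` is a centered Gaussian random vector with standardized entries and
correlation (= covariance) matrix `R`: every linear combination of the
coordinates is a centered real Gaussian with the corresponding variance,
and `R` has unit diagonal. -/
def IsCenteredGaussianVec {Ω : Type*} [MeasureSpace Ω] {n : ℕ}
    (X : Fin n → Ω → ℝ) (R : Matrix (Fin n) (Fin n) ℝ) : Prop :=
  (∀ i, Measurable (X i)) ∧ (∀ i, R i i = 1) ∧
    ∀ a : Fin n → ℝ,
      Measure.map (fun ω => ∑ i, a i * X i ω) (ℙ : Measure Ω) =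
        gaussianReal 0 (Real.toNNReal (∑ i, ∑ j, a i * R i j * a j))

/-!
Put `a = √(2 log ñ)` and let `Φ` be the standard normal distribution function. By Slepian's
inequality, the probability that all `X i` with `i ∈ J` stay below a level only increases when the
vector is replaced by the equicorrelated one `√ρ Z + √(1 - ρ) ξ i`. Slepian's inequality itself is
obtained by swapping covariances: a Gaussian law is the law of `∑_{k < N} Y k / √N` for i.i.d.
copies `Y k` of itself, replacing these summands one by one costs only a third-order Taylor
remainder each time, and the total error tends to `0`.

Conditioning on the common factor `Z` leaves `∫ Φ(w) ^ ñ` against a Gaussian law with mean `δ a` and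
variance `ρ / (1 - ρ)`. Since `ñ = exp (a² / 2)`, the Gaussian tail bound makes `Φ(w) ^ ñ` decay
fast enough below `a - log a / a` to beat the growth of the density, while above that point the
density alone already integrates to the claimed order.
-/

/-! ### Gaussian comparison -/

section Taylor

lemma abs_sub_taylor_two_le {φ φ' φ'' : ℝ → ℝ} {C : ℝ} (hφ : ∀ s, HasDerivAt φ (φ' s) s)
    (hφ' : ∀ s, HasDerivAt φ' (φ'' s) s) (hC : ∀ s ∈ Set.Icc (0 : ℝ) 1, |φ'' s - φ'' 0| ≤ C) :
    |φ 1 - φ 0 - φ' 0 - φ'' 0 / 2| ≤ C := by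
  have mean_value : ∀ ψ ψ' : ℝ → ℝ, (∀ s, HasDerivAt ψ (ψ' s) s) →
      (∀ s ∈ Set.Icc (0 : ℝ) 1, |ψ' s| ≤ C) → ∀ s ∈ Set.Icc (0 : ℝ) 1, |ψ s - ψ 0| ≤ C := by
    intro ψ ψ' hψ hψ' s hs
    have hC0 : 0 ≤ C := (abs_nonneg _).trans (hψ' s hs)
    have h := norm_image_sub_le_of_norm_deriv_le_segment' (fun r _ ↦ (hψ r).hasDerivWithinAt)
      (fun r hr ↦ hψ' r ⟨hr.1, hr.2.le⟩) s hs
    exact h.trans (mul_le_of_le_one_right hC0 (by linarith [hs.2]))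
  have first_order : ∀ s ∈ Set.Icc (0 : ℝ) 1, |φ' s - s * φ'' 0 - φ' 0| ≤ C := by
    simpa using mean_value (fun s ↦ φ' s - s * φ'' 0) (fun s ↦ φ'' s - φ'' 0)
      (fun s ↦ ((hφ' s).sub ((hasDerivAt_id s).mul_const (φ'' 0))).congr_deriv (by simp)) hC
  have second_order := mean_value (fun s ↦ φ s - s * φ' 0 - s ^ 2 / 2 * φ'' 0)
    (fun s ↦ φ' s - s * φ'' 0 - φ' 0)
    (fun s ↦ (((hφ s).sub ((hasDerivAt_id s).mul_const (φ' 0))).sub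
      (((hasDerivAt_pow 2 s).div_const 2).mul_const (φ'' 0))).congr_deriv (by norm_num; ring))
    first_order 1 (by simp)
  convert second_order using 2
  ring

variable {E : Type*} [NormedAddCommGroup E] [NormedSpace ℝ E]

lemma abs_sub_taylor_two_le_of_lipschitzWith {f : E → ℝ} {f' : E → E →L[ℝ] ℝ}
    {f'' : E → E →L[ℝ] E →L[ℝ] ℝ} {K : NNReal} (hf : ∀ x, HasFDerivAt f (f' x) x)
    (hf' : ∀ x, HasFDerivAt f' (f'' x) x) (hf'' : LipschitzWith K f'') (x y : E) :
    |f (x + y) - f x - f' x y - f'' x y y / 2| ≤ K * ‖y‖ ^ 3 := by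
  have line (s : ℝ) : HasDerivAt (fun s : ℝ ↦ x + s • y) y s := by
    simpa using ((hasDerivAt_id s).smul_const y).const_add x
  have lipschitz_line : ∀ s ∈ Set.Icc (0 : ℝ) 1,
      |f'' (x + s • y) y y - f'' (x + (0 : ℝ) • y) y y| ≤ K * ‖y‖ ^ 3 := by
    intro s hs
    calc |f'' (x + s • y) y y - f'' (x + (0 : ℝ) • y) y y|
        = ‖(f'' (x + s • y) - f'' x) y y‖ := by simp
      _ ≤ ‖f'' (x + s • y) - f'' x‖ * ‖y‖ * ‖y‖ := ContinuousLinearMap.le_opNorm₂ _ y y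
      _ ≤ K * ‖s • y‖ * ‖y‖ * ‖y‖ := by
          gcongr
          simpa using hf''.norm_sub_le (x + s • y) x
      _ ≤ K * ‖y‖ * ‖y‖ * ‖y‖ := by
          gcongr
          rw [norm_smul, Real.norm_of_nonneg hs.1]
          exact mul_le_of_le_one_left (norm_nonneg y) hs.2
      _ = K * ‖y‖ ^ 3 := by ring
  have key := abs_sub_taylor_two_le (φ := fun s ↦ f (x + s • y))
    (φ' := fun s ↦ f' (x + s • y) y) (fun s ↦ (hf _).comp_hasDerivAt s (line s))
    (fun s ↦ ((hf' _).comp_hasDerivAt s (line s)).clm_apply (hasDerivAt_const s y) |>.congr_deriv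
      (by simp)) lipschitz_line
  simpa using key

end Taylor

lemma le_of_forall_le_add_sqrt_pow_three {Φ : ℝ → ℝ} {K : ℝ}
    (hΦ : ∀ s t, 0 ≤ s → s ≤ t → t ≤ 1 → Φ t ≤ Φ s + K * √(t - s) ^ 3) : Φ 1 ≤ Φ 0 := by
  have telescoped (N : ℕ) : Φ 1 ≤ Φ 0 + K * √(1 / ((N : ℝ) + 1)) := by
    set h : ℝ := 1 / ((N : ℝ) + 1)
    have h_pos : 0 < h := by positivity
    have h_total : ((N : ℝ) + 1) * h = 1 := mul_one_div_cancel (by positivity)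
    have partial_sum : ∀ k ≤ N + 1, Φ (k * h) ≤ Φ 0 + k * (K * √h ^ 3) := by
      intro k
      induction k with
      | zero => simp
      | succ k ih =>
        intro hk
        have hk' : (k : ℝ) ≤ N := by exact_mod_cast Nat.le_of_succ_le_succ hk
        have step := hΦ (k * h) ((k + 1) * h) (by positivity) (by nlinarith) (by nlinarith)
        rw [show ((k : ℝ) + 1) * h - k * h = h by ring] at step
        push_cast
        linarith [ih (by omega)]
    have total := partial_sum (N + 1) le_rfl
    push_cast at total
    rw [h_total] at total
    calc Φ 1 ≤ Φ 0 + (N + 1) * (K * √h ^ 3) := total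
      _ = Φ 0 + (N + 1) * (√h ^ 2) * (K * √h) := by ring
      _ = Φ 0 + K * √h := by rw [Real.sq_sqrt h_pos.le, h_total, one_mul]
  have error_tendsto := (tendsto_one_div_add_atTop_nhds_zero_nat (𝕜 := ℝ)).sqrt
  refine ge_of_tendsto' (x := Filter.atTop) ?_ telescoped
  simpa using (error_tendsto.const_mul K).const_add (Φ 0)

section Comparison

variable {E : Type*} [NormedAddCommGroup E] [NormedSpace ℝ E] [MeasurableSpace E]

/-- The law of `√t • X`, where `X` has law `μ`: scaling parametrised by the factor by which it
multiplies the covariance, so that for centred Gaussian laws it is additive under convolution. -/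
noncomputable def covScale (μ : Measure E) (t : ℝ) : Measure E := μ.map (√t • ·)

@[simp]
lemma covScale_one (μ : Measure E) : covScale μ 1 = μ := by simp [covScale]

@[simp]
lemma covScale_zero (μ : Measure E) [IsProbabilityMeasure μ] :
    covScale μ 0 = Measure.dirac 0 := by simp [covScale]

variable [BorelSpace E]

instance (μ : Measure E) [IsProbabilityMeasure μ] (t : ℝ) : IsProbabilityMeasure (covScale μ t) :=
  Measure.isProbabilityMeasure_map (by fun_prop)

variable [SecondCountableTopology E]

lemma integral_conv_covScale_eq {f : E → ℝ} {M : ℝ} (hf : Continuous f) (hM : ∀ x, |f x| ≤ M)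
    (κ μ : Measure E) [IsProbabilityMeasure κ] [IsProbabilityMeasure μ] (t : ℝ) :
    ∫ z, f z ∂(κ ∗ covScale μ t) = ∫ x, ∫ y, f (x + √t • y) ∂μ ∂κ := by
  rw [integral_conv (.of_bound (by fun_prop) M (.of_forall hM))]
  refine integral_congr_ae (.of_forall fun x ↦ ?_)
  exact integral_map (by fun_prop) (by fun_prop)

variable [CompleteSpace E]

lemma covScale_conv_covScale {μ : Measure E}
    [IsGaussian μ] (hμ : μ[id] = 0) {s t : ℝ} (hs : 0 ≤ s) (ht : 0 ≤ t) :
    covScale μ s ∗ covScale μ t = covScale μ (s + t) := by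
  have charFun_covScale {r : ℝ} (hr : 0 ≤ r) (L : StrongDual ℝ E) :
      charFunDual (covScale μ r) L = Complex.exp (-(r * Var[L; μ] / 2 : ℝ)) := by
    change charFunDual (μ.map (√r • ContinuousLinearMap.id ℝ E)) L = _
    have scaled_var : Var[L ∘ (√r • ContinuousLinearMap.id ℝ E); μ] = r * Var[L; μ] := by
      simpa [Function.comp_def, Real.sq_sqrt hr] using variance_const_mul (√r) L μ
    rw [charFunDual_map, IsGaussian.charFunDual_eq_of_integral_eq_zero hμ,
      ContinuousLinearMap.coe_comp, scaled_var]
    push_cast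
    ring_nf
  refine Measure.ext_of_charFunDual (funext fun L ↦ ?_)
  rw [charFunDual_conv, charFun_covScale hs, charFun_covScale ht,
    charFun_covScale (add_nonneg hs ht), ← Complex.exp_add]
  congr 1
  push_cast
  ring

variable {f : E → ℝ} {f' : E → E →L[ℝ] ℝ} {f'' : E → E →L[ℝ] E →L[ℝ] ℝ} {K : NNReal} {M : ℝ}

lemma abs_integral_sub_taylor_two_le (hf : ∀ x, HasFDerivAt f (f' x) x)
    (hf' : ∀ x, HasFDerivAt f' (f'' x) x) (hf'' : LipschitzWith K f'') (hM : ∀ x, |f x| ≤ M)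
    {μ : Measure E} [IsProbabilityMeasure μ] (hμ₃ : MemLp id 3 μ) (hμ : μ[id] = 0) (x : E)
    {h : ℝ} (hh : 0 ≤ h) :
    |∫ y, f (x + h • y) ∂μ - f x - h ^ 2 / 2 * ∫ y, f'' x y y ∂μ|
      ≤ h ^ 3 * (K * ∫ y, ‖y‖ ^ 3 ∂μ) := by
  have f_cont : Continuous f := continuous_iff_continuousAt.2 fun x ↦ (hf x).continuousAt
  have integrable_value : Integrable (fun y ↦ f (x + h • y)) μ :=
    .of_bound (by fun_prop) M (.of_forall fun y ↦ hM _)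
  have integrable_linear : Integrable (fun y ↦ f' x (h • y)) μ :=
    (f' x).integrable_comp ((hμ₃.integrable (by norm_num)).smul h)
  have integrable_quadratic : Integrable (fun y ↦ h ^ 2 / 2 * f'' x y y) μ := by
    have integrable_sq : Integrable (fun y ↦ ‖y‖ ^ 2) μ :=
      (hμ₃.mono_exponent (by norm_num)).integrable_norm_pow (p := 2) (by norm_num)
    have bound (y : E) : ‖f'' x y y‖ ≤ ‖f'' x‖ * ‖y‖ ^ 2 := by
      simpa [sq, mul_assoc] using (f'' x).le_opNorm₂ y y
    exact ((integrable_sq.const_mul _).mono' (by fun_prop) (.of_forall bound)).const_mul _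
  have integrable_cube : Integrable (fun y ↦ ‖y‖ ^ 3) μ :=
    hμ₃.integrable_norm_pow (p := 3) (by norm_num)
  have integral_linear : ∫ y, f' x (h • y) ∂μ = 0 := by
    have h_id := (f' x).integral_comp_comm (hμ₃.integrable (by norm_num))
    simp_all [integral_const_mul]
  have integral_remainder : ∫ y, f (x + h • y) ∂μ - f x - h ^ 2 / 2 * ∫ y, f'' x y y ∂μ
      = ∫ y, (f (x + h • y) - f x - f' x (h • y) - h ^ 2 / 2 * f'' x y y) ∂μ := by
    rw [integral_sub ?_ integrable_quadratic, integral_sub ?_ integrable_linear,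
      integral_sub integrable_value (integrable_const _), integral_linear, integral_const_mul]
    · simp
    · exact integrable_value.sub (integrable_const _)
    · exact (integrable_value.sub (integrable_const _)).sub integrable_linear
  rw [integral_remainder, ← integral_const_mul, ← integral_const_mul, ← Real.norm_eq_abs]
  refine norm_integral_le_of_norm_le ((integrable_cube.const_mul _).const_mul _)
    (.of_forall fun y ↦ ?_)
  have taylor := abs_sub_taylor_two_le_of_lipschitzWith hf hf' hf'' x (h • y)
  simp only [norm_smul, map_smul, smul_apply, smul_eq_mul, Real.norm_of_nonneg hh] at taylor
  calc ‖f (x + h • y) - f x - f' x (h • y) - h ^ 2 / 2 * f'' x y y‖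
      = |f (x + h • y) - f x - h * f' x y - h * (h * f'' x y y) / 2| := by
        rw [Real.norm_eq_abs, map_smul, smul_eq_mul]
        ring_nf
    _ ≤ K * (h * ‖y‖) ^ 3 := taylor
    _ = h ^ 3 * (K * ‖y‖ ^ 3) := by ring

lemma integral_conv_covScale_le (hf : ∀ x, HasFDerivAt f (f' x) x)
    (hf' : ∀ x, HasFDerivAt f' (f'' x) x) (hf'' : LipschitzWith K f'') (hM : ∀ x, |f x| ≤ M)
    {μ ν : Measure E} [IsProbabilityMeasure μ] [IsProbabilityMeasure ν] (hμ₃ : MemLp id 3 μ)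
    (hμ : μ[id] = 0) (hν₃ : MemLp id 3 ν) (hν : ν[id] = 0)
    (hμν : ∀ x, ∫ y, f'' x y y ∂μ ≤ ∫ y, f'' x y y ∂ν)
    (κ : Measure E) [IsProbabilityMeasure κ] (t : ℝ) :
    ∫ z, f z ∂(κ ∗ covScale μ t) ≤ ∫ z, f z ∂(κ ∗ covScale ν t)
      + K * (∫ y, ‖y‖ ^ 3 ∂μ + ∫ y, ‖y‖ ^ 3 ∂ν) * √t ^ 3 := by
  have f_cont : Continuous f := continuous_iff_continuousAt.2 fun x ↦ (hf x).continuousAt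
  have integrable_smoothed (ξ : Measure E) [IsProbabilityMeasure ξ] :
      Integrable (fun x ↦ ∫ y, f (x + √t • y) ∂ξ) κ := by
    exact (Integrable.of_bound (μ := κ.prod ξ) (f := fun p ↦ f (p.1 + √t • p.2)) (by fun_prop) M
      (.of_forall fun p ↦ hM _)).integral_prod_left
  have pointwise (x : E) : ∫ y, f (x + √t • y) ∂μ ≤ ∫ y, f (x + √t • y) ∂ν
      + K * (∫ y, ‖y‖ ^ 3 ∂μ + ∫ y, ‖y‖ ^ 3 ∂ν) * √t ^ 3 := by
    have expand_μ := abs_le.1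
      (abs_integral_sub_taylor_two_le hf hf' hf'' hM hμ₃ hμ x (Real.sqrt_nonneg t))
    have expand_ν := abs_le.1
      (abs_integral_sub_taylor_two_le hf hf' hf'' hM hν₃ hν x (Real.sqrt_nonneg t))
    have quadratic := mul_le_mul_of_nonneg_left (hμν x) (by positivity : 0 ≤ √t ^ 2 / 2)
    linarith [expand_μ.2, expand_ν.1]
  rw [integral_conv_covScale_eq f_cont hM, integral_conv_covScale_eq f_cont hM]
  calc ∫ x, ∫ y, f (x + √t • y) ∂μ ∂κ
      ≤ ∫ x, ((∫ y, f (x + √t • y) ∂ν)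
        + K * (∫ y, ‖y‖ ^ 3 ∂μ + ∫ y, ‖y‖ ^ 3 ∂ν) * √t ^ 3) ∂κ :=
        integral_mono (integrable_smoothed μ)
          ((integrable_smoothed ν).add (integrable_const _)) pointwise
    _ = _ := by simp [integral_add (integrable_smoothed ν) (integrable_const _)]

-- By stability, both `covScale μ t ∗ covScale ν (1 - t)` and `covScale μ s ∗ covScale ν (1 - s)`
-- split off the common factor `covScale μ s ∗ covScale ν (1 - t)`, which leaves `μ` against `ν`
-- at scale `t - s`.
theorem integral_le_integral_of_integral_fderiv_two_le (hf : ∀ x, HasFDerivAt f (f' x) x)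
    (hf' : ∀ x, HasFDerivAt f' (f'' x) x) (hf'' : LipschitzWith K f'') (hM : ∀ x, |f x| ≤ M)
    {μ ν : Measure E} [IsGaussian μ] [IsGaussian ν] (hμ : μ[id] = 0) (hν : ν[id] = 0)
    (hμν : ∀ x, ∫ y, f'' x y y ∂μ ≤ ∫ y, f'' x y y ∂ν) :
    ∫ x, f x ∂μ ≤ ∫ x, f x ∂ν := by
  suffices interpolation : ∀ s t, 0 ≤ s → s ≤ t → t ≤ 1 →
      ∫ x, f x ∂(covScale μ t ∗ covScale ν (1 - t)) ≤ ∫ x, f x ∂(covScale μ s ∗ covScale ν (1 - s))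
        + K * (∫ y, ‖y‖ ^ 3 ∂μ + ∫ y, ‖y‖ ^ 3 ∂ν) * √(t - s) ^ 3 by
    simpa using le_of_forall_le_add_sqrt_pow_three interpolation
  intro s t hs hst ht
  have split_μ : covScale μ t ∗ covScale ν (1 - t)
      = (covScale μ s ∗ covScale ν (1 - t)) ∗ covScale μ (t - s) := by
    rw [Measure.conv_assoc, Measure.conv_comm (covScale ν (1 - t)), ← Measure.conv_assoc,
      covScale_conv_covScale hμ hs (sub_nonneg.2 hst), add_sub_cancel]
  have split_ν : covScale μ s ∗ covScale ν (1 - s)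
      = (covScale μ s ∗ covScale ν (1 - t)) ∗ covScale ν (t - s) := by
    rw [Measure.conv_assoc, covScale_conv_covScale hν (sub_nonneg.2 ht) (sub_nonneg.2 hst),
      sub_add_sub_cancel]
  rw [split_μ, split_ν]
  exact integral_conv_covScale_le hf hf' hf'' hM (IsGaussian.memLp_id μ 3 (by simp)) hμ
    (IsGaussian.memLp_id ν 3 (by simp)) hν hμν _ _

end Comparison

/-! ### Slepian's inequality -/

lemma exists_lipschitzWith_sum {α F ι : Type*} [PseudoEMetricSpace α] [SeminormedAddCommGroup F]
    {s : Finset ι} {f : ι → α → F} (hf : ∀ i, ∃ K, LipschitzWith K (f i)) :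
    ∃ K, LipschitzWith K fun x ↦ ∑ i ∈ s, f i x := by
  classical
  induction s using Finset.induction_on with
  | empty => exact ⟨0, by simpa using LipschitzWith.const (0 : F)⟩
  | insert i s hi ih =>
    obtain ⟨Ki, hKi⟩ := hf i
    obtain ⟨Ks, hKs⟩ := ih
    exact ⟨Ki + Ks, by simpa [Finset.sum_insert hi] using hKi.add hKs⟩

lemma exists_lipschitzWith_smul_const {α F : Type*} [PseudoEMetricSpace α]
    [SeminormedAddCommGroup F] [NormedSpace ℝ F] {φ : α → ℝ} (hφ : ∃ K, LipschitzWith K φ) (c : F) :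
    ∃ K, LipschitzWith K fun x ↦ φ x • c := by
  obtain ⟨K, hK⟩ := hφ
  exact ⟨_, (ContinuousLinearMap.toSpanSingleton ℝ c).lipschitz.comp hK⟩

section Slepian

open scoped ContDiff

variable {ι : Type*}

/-- The `i`-th coordinate functional: `ContinuousLinearMap.proj` with its family of codomains fixed,
which unification cannot find. -/
abbrev coordCLM (i : ι) : (ι → ℝ) →L[ℝ] ℝ := ContinuousLinearMap.proj i

variable [Fintype ι]

/-- The mixed partial derivative of `x ↦ ∏ i, g i (x i)` of multi-index `k`. -/
noncomputable def mixedDeriv (g : ι → ℝ → ℝ) (k : ι → ℕ) (x : ι → ℝ) : ℝ :=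
  ∏ i, iteratedDeriv (k i) (g i) (x i)

@[simp]
lemma mixedDeriv_zero (g : ι → ℝ → ℝ) : mixedDeriv g 0 = fun x ↦ ∏ i, g i (x i) := by
  simp [mixedDeriv, funext_iff]

variable {g : ι → ℝ → ℝ}

lemma exists_abs_mixedDeriv_le (hb : ∀ i k, ∃ C, ∀ x, |iteratedDeriv k (g i) x| ≤ C)
    (k : ι → ℕ) : ∃ M, ∀ x, |mixedDeriv g k x| ≤ M := by
  choose C hC using hb
  refine ⟨∏ i, C i (k i), fun x ↦ ?_⟩
  rw [mixedDeriv, Finset.abs_prod]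
  exact Finset.prod_le_prod (fun i _ ↦ abs_nonneg _) fun i _ ↦ hC i (k i) (x i)

lemma hasFDerivAt_mixedDeriv [DecidableEq ι] (hg : ∀ i, ContDiff ℝ ∞ (g i)) (k : ι → ℕ)
    (x : ι → ℝ) :
    HasFDerivAt (mixedDeriv g k)
      (∑ i, mixedDeriv g (k + Pi.single i 1) x • coordCLM i) x := by
  have factor (i : ι) : HasFDerivAt (fun x : ι → ℝ ↦ iteratedDeriv (k i) (g i) (x i))
      (iteratedDeriv (k i + 1) (g i) (x i) • coordCLM i) x := by
    have smooth :=
      (hg i).differentiable_iteratedDeriv (k i) (mod_cast ENat.natCast_lt_top _)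
    have h := (smooth (x i)).hasDerivAt
    rw [← iteratedDeriv_succ] at h
    exact h.comp_hasFDerivAt x (coordCLM i).hasFDerivAt
  refine (HasFDerivAt.finsetProd fun i _ ↦ factor i).congr_fderiv ?_
  refine Finset.sum_congr rfl fun i _ ↦ ?_
  have other_factors : ∏ j ∈ Finset.univ.erase i,
      iteratedDeriv ((k + Pi.single i 1 : ι → ℕ) j) (g j) (x j)
        = ∏ j ∈ Finset.univ.erase i, iteratedDeriv (k j) (g j) (x j) :=
    Finset.prod_congr rfl fun j hj ↦ by simp [Finset.ne_of_mem_erase hj]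
  rw [mixedDeriv, ← Finset.prod_erase_mul _ _ (Finset.mem_univ i), other_factors, smul_smul]
  simp

lemma exists_lipschitzWith_mixedDeriv (hg : ∀ i, ContDiff ℝ ∞ (g i))
    (hb : ∀ i k, ∃ C, ∀ x, |iteratedDeriv k (g i) x| ≤ C) (k : ι → ℕ) :
    ∃ K, LipschitzWith K (mixedDeriv g k) := by
  classical
  choose M hM using exists_abs_mixedDeriv_le hb
  refine ⟨Real.toNNReal (∑ i, M (k + Pi.single i 1)),
    lipschitzWith_of_nnnorm_fderiv_le
      (fun x ↦ (hasFDerivAt_mixedDeriv hg k x).differentiableAt) fun x ↦ ?_⟩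
  rw [(hasFDerivAt_mixedDeriv hg k x).fderiv, ← NNReal.coe_le_coe, coe_nnnorm]
  have norm_proj (i : ι) : ‖coordCLM i‖ ≤ 1 :=
    ContinuousLinearMap.opNorm_le_bound _ zero_le_one fun y ↦ by simpa using norm_le_pi_norm y i
  refine (norm_sum_le _ _).trans ((Finset.sum_le_sum fun i _ ↦ ?_).trans (Real.le_coe_toNNReal _))
  rw [norm_smul]
  exact (mul_le_of_le_one_right (norm_nonneg _) (norm_proj i)).trans (hM _ x)

section Hessian

variable [DecidableEq ι]

/-- The second derivative at `x` of `x ↦ ∏ i, g i (x i)`, as a bilinear form. -/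
noncomputable def prodHessian (g : ι → ℝ → ℝ) (x : ι → ℝ) :
    (ι → ℝ) →L[ℝ] (ι → ℝ) →L[ℝ] ℝ :=
  ∑ i, ∑ j, mixedDeriv g (Pi.single i 1 + Pi.single j 1) x •
    (coordCLM j).smulRight (coordCLM i)

lemma prodHessian_apply_self (x y : ι → ℝ) :
    prodHessian g x y y
      = ∑ i, ∑ j, mixedDeriv g (Pi.single i 1 + Pi.single j 1) x * (y i * y j) := by
  simp [prodHessian, mul_comm]

lemma hasFDerivAt_prod (hg : ∀ i, ContDiff ℝ ∞ (g i)) (x : ι → ℝ) :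
    HasFDerivAt (fun x ↦ ∏ i, g i (x i))
      (∑ i, mixedDeriv g (Pi.single i 1) x • coordCLM i) x := by
  simpa using hasFDerivAt_mixedDeriv hg 0 x

lemma hasFDerivAt_fderiv_prod (hg : ∀ i, ContDiff ℝ ∞ (g i)) (x : ι → ℝ) :
    HasFDerivAt
      (fun x ↦ ∑ i, mixedDeriv g (Pi.single i 1) x • coordCLM i)
      (prodHessian g x) x := by
  refine (HasFDerivAt.fun_sum fun i _ ↦
    (hasFDerivAt_mixedDeriv hg (Pi.single i 1) x).smul_const _).congr_fderiv ?_
  ext y z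
  simp [prodHessian, Finset.sum_mul, mul_assoc]

lemma exists_lipschitzWith_prodHessian (hg : ∀ i, ContDiff ℝ ∞ (g i))
    (hb : ∀ i k, ∃ C, ∀ x, |iteratedDeriv k (g i) x| ≤ C) :
    ∃ K, LipschitzWith K (prodHessian g) := by
  have lipschitz_entry (i j : ι) := exists_lipschitzWith_smul_const
    (exists_lipschitzWith_mixedDeriv hg hb (Pi.single i 1 + Pi.single j 1))
    ((coordCLM j).smulRight (coordCLM i))
  have lipschitz_row (i : ι) := exists_lipschitzWith_sum (s := Finset.univ) (lipschitz_entry i)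
  exact exists_lipschitzWith_sum (s := Finset.univ) lipschitz_row

lemma mixedDeriv_single_add_single_nonneg (hg₀ : ∀ i x, 0 ≤ g i x) (hga : ∀ i, Antitone (g i))
    {i j : ι} (hij : i ≠ j) (x : ι → ℝ) :
    0 ≤ mixedDeriv g (Pi.single i 1 + Pi.single j 1) x := by
  rw [mixedDeriv, ← Finset.mul_prod_erase _ _ (Finset.mem_univ i),
    ← Finset.mul_prod_erase _ _ (Finset.mem_erase.2 ⟨hij.symm, Finset.mem_univ j⟩), ← mul_assoc]
  refine mul_nonneg ?_ (Finset.prod_nonneg fun l hl ↦ ?_)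
  · simpa [hij, hij.symm] using
      mul_nonneg_of_nonpos_of_nonpos (hga i).deriv_nonpos (hga j).deriv_nonpos
  · simp only [Finset.mem_erase] at hl
    simpa [hl.1, hl.2.1] using hg₀ l (x l)

lemma integral_prodHessian {μ : Measure (ι → ℝ)} [IsProbabilityMeasure μ] (hμ₂ : MemLp id 2 μ)
    (hμ : μ[id] = 0) (x : ι → ℝ) :
    ∫ y, prodHessian g x y y ∂μ = ∑ i, ∑ j, mixedDeriv g (Pi.single i 1 + Pi.single j 1) x *
      cov[fun y ↦ y i, fun y ↦ y j; μ] := by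
  have memLp_coord (i : ι) : MemLp (fun y : ι → ℝ ↦ y i) 2 μ :=
    (coordCLM i).comp_memLp' hμ₂
  have integral_coord (i : ι) : ∫ y, y i ∂μ = 0 := by
    have h := (coordCLM i).integral_comp_comm (hμ₂.integrable one_le_two)
    rw [hμ] at h
    simpa using h
  have integrable_mul (i j : ι) : Integrable (fun y : ι → ℝ ↦
      mixedDeriv g (Pi.single i 1 + Pi.single j 1) x * (y i * y j)) μ :=
    ((memLp_coord i).integrable_mul (memLp_coord j)).const_mul _
  simp_rw [prodHessian_apply_self]
  rw [integral_finsetSum _ fun i _ ↦ integrable_finsetSum _ fun j _ ↦ integrable_mul i j]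
  refine Finset.sum_congr rfl fun i _ ↦ ?_
  rw [integral_finsetSum _ fun j _ ↦ integrable_mul i j]
  refine Finset.sum_congr rfl fun j _ ↦ ?_
  rw [integral_const_mul, covariance_eq_sub (memLp_coord i) (memLp_coord j), integral_coord]
  simp

end Hessian

variable {μ ν : Measure (ι → ℝ)} [IsGaussian μ] [IsGaussian ν]

lemma integral_prod_antitone_le (hg : ∀ i, ContDiff ℝ ∞ (g i))
    (hb : ∀ i k, ∃ C, ∀ x, |iteratedDeriv k (g i) x| ≤ C) (hg₀ : ∀ i x, 0 ≤ g i x)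
    (hga : ∀ i, Antitone (g i)) (hμ : μ[id] = 0) (hν : ν[id] = 0)
    (hvar : ∀ i, Var[fun y ↦ y i; μ] = Var[fun y ↦ y i; ν])
    (hcov : ∀ i j, i ≠ j →
      cov[fun y ↦ y i, fun y ↦ y j; μ] ≤ cov[fun y ↦ y i, fun y ↦ y j; ν]) :
    ∫ x, ∏ i, g i (x i) ∂μ ≤ ∫ x, ∏ i, g i (x i) ∂ν := by
  classical
  obtain ⟨K, hK⟩ := exists_lipschitzWith_prodHessian hg hb
  obtain ⟨M, hM⟩ := exists_abs_mixedDeriv_le hb 0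
  refine integral_le_integral_of_integral_fderiv_two_le (hasFDerivAt_prod hg)
    (hasFDerivAt_fderiv_prod hg) hK (by simpa using hM) hμ hν fun x ↦ ?_
  rw [integral_prodHessian (IsGaussian.memLp_id μ 2 (by simp)) hμ,
    integral_prodHessian (IsGaussian.memLp_id ν 2 (by simp)) hν]
  refine Finset.sum_le_sum fun i _ ↦ Finset.sum_le_sum fun j _ ↦ ?_
  rcases eq_or_ne i j with rfl | hij
  · rw [covariance_self (measurable_pi_apply i).aemeasurable,
      covariance_self (measurable_pi_apply i).aemeasurable, hvar]
  · exact mul_le_mul_of_nonneg_left (hcov i j hij)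
      (mixedDeriv_single_add_single_nonneg hg₀ hga hij x)

end Slepian

section Cutoff

open scoped ContDiff

lemma exists_abs_iteratedDeriv_le_of_eventually_const {g : ℝ → ℝ} (hg : ContDiff ℝ ∞ g)
    {a b c d : ℝ} (hleft : ∀ x ≤ a, g x = c) (hright : ∀ x, b ≤ x → g x = d) (k : ℕ) :
    ∃ C, ∀ x, |iteratedDeriv (k + 1) g x| ≤ C := by
  have deriv_support : HasCompactSupport (deriv g) := by
    refine HasCompactSupport.intro (isCompact_Icc (a := a) (b := b)) fun x hx ↦ ?_
    rw [Set.mem_Icc, not_and_or, not_le, not_le] at hx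
    rcases hx with hx | hx
    · have h : g =ᶠ[nhds x] fun _ ↦ c := by
        filter_upwards [Iio_mem_nhds hx] with y hy using hleft y hy.le
      simp [h.deriv_eq]
    · have h : g =ᶠ[nhds x] fun _ ↦ d := by
        filter_upwards [Ioi_mem_nhds hx] with y hy using hright y hy.le
      simp [h.deriv_eq]
  have support : HasCompactSupport (iteratedDeriv (k + 1) g) := by
    induction k with
    | zero => simpa [iteratedDeriv_one] using deriv_support
    | succ k ih => simpa [iteratedDeriv_succ (n := k + 1)] using ih.deriv
  exact (hg.continuous_iteratedDeriv (k + 1) (mod_cast le_top)).bounded_above_of_compact_support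
    support

/-- A smooth antitone cutoff, equal to `1` on `(-∞, u]` and to `0` on `[u + ε, ∞)`. -/
noncomputable def smoothCutoff (u ε x : ℝ) : ℝ := Real.smoothTransition ((u + ε - x) / ε)

variable {u ε : ℝ}

lemma contDiff_smoothCutoff : ContDiff ℝ ∞ (smoothCutoff u ε) :=
  Real.smoothTransition.contDiff.comp (by fun_prop)

lemma smoothCutoff_nonneg (x : ℝ) : 0 ≤ smoothCutoff u ε x := Real.smoothTransition.nonneg _

lemma smoothCutoff_le_one (x : ℝ) : smoothCutoff u ε x ≤ 1 := Real.smoothTransition.le_one _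

lemma antitone_smoothCutoff (hε : 0 < ε) : Antitone (smoothCutoff u ε) :=
  fun _ _ hxy ↦ Real.smoothTransition.monotone (by gcongr)

lemma smoothCutoff_eq_one (hε : 0 < ε) {x : ℝ} (hx : x ≤ u) : smoothCutoff u ε x = 1 :=
  Real.smoothTransition.one_of_one_le (by rw [le_div_iff₀ hε]; linarith)

lemma smoothCutoff_eq_zero (hε : 0 < ε) {x : ℝ} (hx : u + ε ≤ x) : smoothCutoff u ε x = 0 :=
  Real.smoothTransition.zero_of_nonpos (div_nonpos_of_nonpos_of_nonneg (by linarith) hε.le)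

lemma exists_abs_iteratedDeriv_smoothCutoff_le (hε : 0 < ε) (k : ℕ) :
    ∃ C, ∀ x, |iteratedDeriv k (smoothCutoff u ε) x| ≤ C := by
  rcases k with _ | k
  · exact ⟨1, fun x ↦ by simpa [abs_of_nonneg (smoothCutoff_nonneg x)] using smoothCutoff_le_one x⟩
  · exact exists_abs_iteratedDeriv_le_of_eventually_const contDiff_smoothCutoff
      (fun x ↦ smoothCutoff_eq_one hε) (fun x ↦ smoothCutoff_eq_zero hε) k

end Cutoff

section SlepianIic

variable {ι : Type*} [Fintype ι] {μ ν : Measure (ι → ℝ)}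

lemma integrable_prod_smoothCutoff (μ : Measure (ι → ℝ)) [IsFiniteMeasure μ] (u : ι → ℝ) (ε : ℝ) :
    Integrable (fun x ↦ ∏ i, smoothCutoff (u i) ε (x i)) μ := by
  have continuous_prod : Continuous fun x : ι → ℝ ↦ ∏ i, smoothCutoff (u i) ε (x i) :=
    continuous_finsetProd _ fun i _ ↦ contDiff_smoothCutoff.continuous.comp (continuous_apply i)
  refine .of_bound continuous_prod.aestronglyMeasurable 1 (.of_forall fun x ↦ ?_)
  rw [Real.norm_of_nonneg (Finset.prod_nonneg fun i _ ↦ smoothCutoff_nonneg _)]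
  exact Finset.prod_le_one (fun i _ ↦ smoothCutoff_nonneg _) fun i _ ↦ smoothCutoff_le_one _

lemma measureReal_Iic_le_integral_prod_smoothCutoff [IsProbabilityMeasure μ] (u : ι → ℝ) {ε : ℝ}
    (hε : 0 < ε) :
    μ.real (Set.Iic u) ≤ ∫ x, ∏ i, smoothCutoff (u i) ε (x i) ∂μ := by
  rw [← integral_indicator_one measurableSet_Iic]
  refine integral_mono ((integrable_const 1).indicator measurableSet_Iic)
    (integrable_prod_smoothCutoff μ u ε) fun x ↦ ?_
  by_cases hx : x ∈ Set.Iic u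
  · simp [Set.indicator_of_mem hx, smoothCutoff_eq_one hε (hx _)]
  · rw [Set.indicator_of_notMem hx]
    exact Finset.prod_nonneg fun i _ ↦ smoothCutoff_nonneg _

lemma integral_prod_smoothCutoff_le_measureReal_Iic [IsProbabilityMeasure μ] (u : ι → ℝ) {ε : ℝ}
    (hε : 0 < ε) :
    ∫ x, ∏ i, smoothCutoff (u i) ε (x i) ∂μ ≤ μ.real (Set.Iic (fun i ↦ u i + ε)) := by
  rw [← integral_indicator_one measurableSet_Iic]
  refine integral_mono (integrable_prod_smoothCutoff μ u ε)
    ((integrable_const 1).indicator measurableSet_Iic) fun x ↦ ?_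
  by_cases hx : x ∈ Set.Iic (fun i ↦ u i + ε)
  · rw [Set.indicator_of_mem hx]
    exact Finset.prod_le_one (fun i _ ↦ smoothCutoff_nonneg _) fun i _ ↦ smoothCutoff_le_one _
  · obtain ⟨i, hi⟩ : ∃ i, u i + ε < x i := by simpa [Pi.le_def] using hx
    rw [Set.indicator_of_notMem hx,
      Finset.prod_eq_zero (Finset.mem_univ i) (smoothCutoff_eq_zero hε hi.le)]

theorem slepian_inequality [IsGaussian μ] [IsGaussian ν] (hμ : μ[id] = 0) (hν : ν[id] = 0)
    (hvar : ∀ i, Var[fun y ↦ y i; μ] = Var[fun y ↦ y i; ν])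
    (hcov : ∀ i j, i ≠ j →
      cov[fun y ↦ y i, fun y ↦ y j; μ] ≤ cov[fun y ↦ y i, fun y ↦ y j; ν]) (u : ι → ℝ) :
    μ (Set.Iic u) ≤ ν (Set.Iic u) := by
  have relaxed {ε : ℝ} (hε : 0 < ε) : μ (Set.Iic u) ≤ ν (Set.Iic fun i ↦ u i + ε) := by
    rw [← ENNReal.toReal_le_toReal (measure_ne_top _ _) (measure_ne_top _ _)]
    calc μ.real (Set.Iic u) ≤ ∫ x, ∏ i, smoothCutoff (u i) ε (x i) ∂μ :=
          measureReal_Iic_le_integral_prod_smoothCutoff u hε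
      _ ≤ ∫ x, ∏ i, smoothCutoff (u i) ε (x i) ∂ν :=
          integral_prod_antitone_le (fun i ↦ contDiff_smoothCutoff)
            (fun i ↦ exists_abs_iteratedDeriv_smoothCutoff_le hε) (fun i ↦ smoothCutoff_nonneg)
            (fun i ↦ antitone_smoothCutoff hε) hμ hν hvar hcov
      _ ≤ ν.real (Set.Iic fun i ↦ u i + ε) := integral_prod_smoothCutoff_le_measureReal_Iic u hε
  have relaxed_iInter : ⋂ n : ℕ, Set.Iic (fun i ↦ u i + 1 / ((n : ℝ) + 1)) = Set.Iic u := by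
    ext x
    simp only [Set.mem_iInter, Set.mem_Iic, Pi.le_def]
    refine ⟨fun h i ↦ ge_of_tendsto' (x := Filter.atTop) ?_ fun n ↦ h n i,
      fun h n i ↦ (h i).trans (le_add_of_nonneg_right (by positivity))⟩
    simpa using (tendsto_one_div_add_atTop_nhds_zero_nat (𝕜 := ℝ)).const_add (u i)
  have limit := tendsto_measure_iInter_atTop (μ := ν)
    (s := fun n : ℕ ↦ Set.Iic fun i ↦ u i + 1 / ((n : ℝ) + 1))
    (fun n ↦ measurableSet_Iic.nullMeasurableSet)
    (fun m n hmn ↦ Set.Iic_subset_Iic.2 fun i ↦ by gcongr) ⟨0, by simp⟩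
  rw [relaxed_iInter] at limit
  exact ge_of_tendsto' limit fun n ↦ relaxed (by positivity)

end SlepianIic

/-! ### Equicorrelated Gaussian vectors -/

section Equicorrelated

variable {ι : Type*} [Fintype ι]

lemma covariance_fst_add_snd_prod {Ω Ω' : Type*} {mΩ : MeasurableSpace Ω}
    {mΩ' : MeasurableSpace Ω'} {μ : Measure Ω} {ν : Measure Ω'} [IsProbabilityMeasure μ]
    [IsProbabilityMeasure ν] {f g : Ω → ℝ} {h k : Ω' → ℝ} (hf : MemLp f 2 μ) (hg : MemLp g 2 μ)
    (hh : MemLp h 2 ν) (hk : MemLp k 2 ν) :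
    cov[fun p ↦ f p.1 + h p.2, fun p ↦ g p.1 + k p.2; μ.prod ν] =
      cov[f, g; μ] + cov[h, k; ν] := by
  have hfst : cov[fun p ↦ f p.1, fun p ↦ g p.1; μ.prod ν] = cov[f, g; μ] :=
    (HasLaw.mk (by fun_prop) measurePreserving_fst.map_eq).covariance_fun_comp
      hf.aemeasurable hg.aemeasurable
  have hsnd : cov[fun p ↦ h p.2, fun p ↦ k p.2; μ.prod ν] = cov[h, k; ν] :=
    (HasLaw.mk (by fun_prop) measurePreserving_snd.map_eq).covariance_fun_comp
      hh.aemeasurable hk.aemeasurable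
  have hf' := hf.comp_fst ν
  have hg' := hg.comp_fst ν
  have hh' := hh.comp_snd μ
  have hk' := hk.comp_snd μ
  have hfk : cov[fun p ↦ f p.1, fun p ↦ k p.2; μ.prod ν] = 0 := covariance_fst_snd_prod hf hk
  have hhg : cov[fun p ↦ h p.2, fun p ↦ g p.1; μ.prod ν] = 0 := by
    rw [covariance_comm, covariance_fst_snd_prod hg hh]
  rw [← hfst, ← hsnd]
  refine (covariance_add_left hf' hh' (hg'.add hk')).trans ?_
  rw [covariance_add_right hf' hg' hk', covariance_add_right hh' hg' hk', hfk, hhg]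
  ring

lemma measurable_gaussianReal_Iic {m : ℝ} {v : NNReal} :
    Measurable fun w ↦ gaussianReal m v (Set.Iic w) :=
  Monotone.measurable fun _ _ h ↦ measure_mono (Set.Iic_subset_Iic.2 h)

instance isGaussian_pi_gaussianReal : IsGaussian (Measure.pi fun _ : ι ↦ gaussianReal 0 1) := by
  have hcoord (i : ι) :
      HasGaussianLaw (fun x : ι → ℝ ↦ x i) (Measure.pi fun _ ↦ gaussianReal 0 1) :=
    ⟨by rw [(measurePreserving_eval _ i).map_eq]; infer_instance⟩
  have hindep : iIndepFun (fun (i : ι) (x : ι → ℝ) ↦ x i) (Measure.pi fun _ ↦ gaussianReal 0 1) :=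
    iIndepFun_pi (X := fun _ ↦ id) fun _ ↦ aemeasurable_id
  simpa using (hindep.hasGaussianLaw hcoord).isGaussian_map

lemma memLp_eval_pi_gaussianReal (i : ι) :
    MemLp (fun x : ι → ℝ ↦ x i) 2 (Measure.pi fun _ ↦ gaussianReal 0 1) :=
  (memLp_id_gaussianReal 2).comp_measurePreserving (measurePreserving_eval _ i)

lemma covariance_eval_pi_gaussianReal [DecidableEq ι] (i j : ι) :
    cov[fun x ↦ x i, fun x ↦ x j; Measure.pi fun _ : ι ↦ gaussianReal 0 1] =
      if i = j then 1 else 0 := by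
  split_ifs with hij
  · subst hij
    rw [covariance_self (measurable_pi_apply i).aemeasurable]
    exact ((measurePreserving_eval (fun _ : ι ↦ gaussianReal 0 1) i).variance_fun_comp
      aemeasurable_id).trans (by simp)
  · exact (iIndepFun_pi (X := fun _ ↦ id) fun _ ↦ aemeasurable_id).indepFun hij
      |>.covariance_eq_zero (memLp_eval_pi_gaussianReal i) (memLp_eval_pi_gaussianReal j)

/-- The continuous linear map `(x, z) ↦ (√(1 - ρ) xᵢ + √ρ z)ᵢ` mixing idiosyncratic noises `xᵢ`
with a common factor `z`. -/
noncomputable def commonFactorCLM (ι : Type*) [Fintype ι] (ρ : ℝ) : (ι → ℝ) × ℝ →L[ℝ] ι → ℝ :=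
  .pi fun i ↦ √(1 - ρ) • (.proj i ∘L .fst ℝ _ _) + √ρ • .snd ℝ _ _

lemma commonFactorCLM_apply (ρ : ℝ) (p : (ι → ℝ) × ℝ) (i : ι) :
    commonFactorCLM ι ρ p i = √(1 - ρ) * p.1 i + √ρ * p.2 := rfl

/-- The law of the equicorrelated Gaussian vector `√(1 - ρ) ξᵢ + √ρ ζ` with `ξᵢ`, `ζ` independent
standard Gaussians; for `0 ≤ ρ ≤ 1` it is the centred Gaussian law on `ℝ^ι` with unit variances
and all correlations equal to `ρ`. -/
noncomputable def equicorrelatedGaussian (ι : Type*) [Fintype ι] (ρ : ℝ) : Measure (ι → ℝ) :=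
  ((Measure.pi fun _ : ι ↦ gaussianReal 0 1).prod (gaussianReal 0 1)).map (commonFactorCLM ι ρ)

instance (ρ : ℝ) : IsGaussian (equicorrelatedGaussian ι ρ) := isGaussian_map _

lemma integral_id_equicorrelatedGaussian (ρ : ℝ) : (equicorrelatedGaussian ι ρ)[id] = 0 := by
  ext i
  have hnoise : ∫ x : ι → ℝ, x i ∂Measure.pi (fun _ ↦ gaussianReal 0 1) = 0 :=
    (integral_comp_eval (μ := fun _ : ι ↦ gaussianReal 0 1) aestronglyMeasurable_id).trans
      integral_id_gaussianReal
  have hcoord : AEStronglyMeasurable (fun y : ι → ℝ ↦ y i) (equicorrelatedGaussian ι ρ) :=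
    (measurable_pi_apply i).aestronglyMeasurable
  have hx := (memLp_eval_pi_gaussianReal i).integrable one_le_two |>.comp_fst (gaussianReal 0 1)
  have hz : Integrable (fun p : (ι → ℝ) × ℝ ↦ p.2)
      ((Measure.pi fun _ ↦ gaussianReal 0 1).prod (gaussianReal 0 1)) :=
    ((memLp_id_gaussianReal 2).integrable one_le_two).comp_snd _
  rw [eval_integral fun k ↦ (IsGaussian.integrable_id (μ := equicorrelatedGaussian ι ρ)).eval k,
    equicorrelatedGaussian]
  simp only [id]
  rw [integral_map (by fun_prop) hcoord]
  simp only [commonFactorCLM_apply]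
  rw [integral_add (hx.const_mul _) (hz.const_mul _), integral_const_mul, integral_const_mul,
    integral_fun_fst (fun x : ι → ℝ ↦ x i), integral_fun_snd (fun z ↦ z), hnoise,
    integral_id_gaussianReal]
  simp

lemma covariance_equicorrelatedGaussian [DecidableEq ι] {ρ : ℝ} (hρ₀ : 0 ≤ ρ) (hρ₁ : ρ ≤ 1)
    (i j : ι) : cov[fun y ↦ y i, fun y ↦ y j; equicorrelatedGaussian ι ρ] =
      if i = j then 1 else ρ := by
  have hcoord (k : ι) : AEStronglyMeasurable (fun y : ι → ℝ ↦ y k)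
      (equicorrelatedGaussian ι ρ) := (measurable_pi_apply k).aestronglyMeasurable
  have hz : MemLp (fun z : ℝ ↦ z) 2 (gaussianReal 0 1) := memLp_id_gaussianReal 2
  have hcommon : cov[fun z ↦ √ρ * z, fun z ↦ √ρ * z; gaussianReal 0 1] = ρ := by
    rw [covariance_self (by fun_prop), variance_const_mul, variance_fun_id_gaussianReal]
    simp [hρ₀]
  rw [equicorrelatedGaussian, covariance_map_fun (hcoord i) (hcoord j) (by fun_prop)]
  simp only [commonFactorCLM_apply]
  rw [covariance_fst_add_snd_prod
      ((memLp_eval_pi_gaussianReal i).const_mul _) ((memLp_eval_pi_gaussianReal j).const_mul _)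
      (hz.const_mul _) (hz.const_mul _)]
  simp only [covariance_const_mul_left, covariance_const_mul_right,
    covariance_eval_pi_gaussianReal, hcommon, ← mul_assoc,
    Real.mul_self_sqrt (sub_nonneg.2 hρ₁)]
  split_ifs <;> ring

lemma equicorrelatedGaussian_Iic_const {ρ : ℝ} (hρ₀ : 0 ≤ ρ) (hρ₁ : ρ < 1) (u : ℝ) :
    equicorrelatedGaussian ι ρ (Set.Iic fun _ ↦ u) =
      ∫⁻ w, gaussianReal 0 1 (Set.Iic w) ^ Fintype.card ι
        ∂gaussianReal (u / √(1 - ρ)) (ρ / (1 - ρ)).toNNReal := by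
  have hs : 0 < √(1 - ρ) := Real.sqrt_pos.2 (sub_pos.2 hρ₁)
  have hslice (z : ℝ) : (fun x ↦ (x, z)) ⁻¹' (commonFactorCLM ι ρ ⁻¹' Set.Iic fun _ ↦ u) =
      Set.univ.pi fun _ ↦ Set.Iic (u / √(1 - ρ) - √ρ / √(1 - ρ) * z) := by
    ext x
    simp only [Set.mem_preimage, Set.mem_Iic, Pi.le_def, commonFactorCLM_apply, Set.mem_univ_pi]
    refine forall_congr' fun i ↦ ?_
    rw [div_mul_eq_mul_div, ← sub_div, le_div_iff₀ hs, le_sub_iff_add_le, mul_comm (x i)]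
  have hlevel : (gaussianReal 0 1).map (fun z ↦ u / √(1 - ρ) - √ρ / √(1 - ρ) * z) =
      gaussianReal (u / √(1 - ρ)) (ρ / (1 - ρ)).toNNReal := by
    have hvar : NNReal.mk ((√ρ / √(1 - ρ)) ^ 2) (sq_nonneg _) = (ρ / (1 - ρ)).toNNReal := by
      ext
      simp [div_pow, hρ₀, hρ₁.le, div_nonneg]
    rw [← Function.comp_def (u / √(1 - ρ) - ·), ← Measure.map_map (by fun_prop) (by fun_prop),
      gaussianReal_map_const_mul, gaussianReal_map_const_sub, hvar]
    simp
  rw [equicorrelatedGaussian, Measure.map_apply (by fun_prop) measurableSet_Iic,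
    Measure.prod_apply_symm (measurableSet_Iic.preimage (by fun_prop)), ← hlevel,
    lintegral_map (measurable_gaussianReal_Iic.pow_const _) (by fun_prop)]
  simp only [hslice, Measure.pi_pi, Finset.prod_const, Finset.card_univ]

theorem measure_Iic_const_le_of_covariance_le {μ : Measure (ι → ℝ)} [IsGaussian μ]
    (hμ : μ[id] = 0) (hvar : ∀ i, Var[fun y ↦ y i; μ] = 1) {ρ : ℝ} (hρ₀ : 0 ≤ ρ) (hρ₁ : ρ < 1)
    (hcov : ∀ i j, i ≠ j → cov[fun y ↦ y i, fun y ↦ y j; μ] ≤ ρ) (u : ℝ) :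
    μ (Set.Iic fun _ ↦ u) ≤ ∫⁻ w, gaussianReal 0 1 (Set.Iic w) ^ Fintype.card ι
      ∂gaussianReal (u / √(1 - ρ)) (ρ / (1 - ρ)).toNNReal := by
  classical
  rw [← equicorrelatedGaussian_Iic_const hρ₀ hρ₁]
  have hequi := covariance_equicorrelatedGaussian (ι := ι) hρ₀ hρ₁.le
  refine slepian_inequality hμ (integral_id_equicorrelatedGaussian ρ) (fun i ↦ ?_)
    (fun i j hij ↦ ?_) _
  · rw [hvar, ← covariance_self (measurable_pi_apply i).aemeasurable, hequi, if_pos rfl]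
  · simpa only [hequi, if_neg hij] using hcov i j hij

end Equicorrelated

namespace IsCenteredGaussianVec

variable {Ω : Type*} [MeasureSpace Ω] {n : ℕ} {X : Fin n → Ω → ℝ} {R : Matrix (Fin n) (Fin n) ℝ}

lemma hasGaussianLaw (hX : IsCenteredGaussianVec X R) :
    HasGaussianLaw (fun ω i ↦ X i ω) (ℙ : Measure Ω) where
  isGaussian_map := by
    have hXm : Measurable fun ω i ↦ X i ω := measurable_pi_lambda _ hX.1
    refine isGaussian_of_map_eq_gaussianReal fun L ↦
      ⟨_, _, Eq.trans ?_ (hX.2.2 fun i ↦ L fun j ↦ if i = j then 1 else 0)⟩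
    rw [Measure.map_map (by fun_prop) hXm]
    congr 1 with ω
    simpa [mul_comm] using L.toLinearMap.pi_apply_eq_sum_univ fun i ↦ X i ω

lemma map_eval_add_eval (hX : IsCenteredGaussianVec X R) (i j : Fin n) :
    (ℙ : Measure Ω).map (fun ω ↦ X i ω + X j ω) =
      gaussianReal 0 (2 + R i j + R j i).toNNReal := by
  have hquad : R i i + R j i + (R i j + R j j) = 2 + R i j + R j i := by
    rw [hX.2.1, hX.2.1]; ring
  have hlaw := hX.2.2 (Pi.single i 1 + Pi.single j 1)
  simpa [Pi.single_apply, add_mul, mul_add, Finset.sum_add_distrib, hquad] using hlaw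

lemma map_eval (hX : IsCenteredGaussianVec X R) (i : Fin n) :
    (ℙ : Measure Ω).map (X i) = gaussianReal 0 1 := by
  simpa [Pi.single_apply, hX.2.1] using hX.2.2 (Pi.single i 1)

lemma variance_eval (hX : IsCenteredGaussianVec X R) (i : Fin n) : Var[X i] = 1 := by
  rw [← variance_id_map (hX.1 i).aemeasurable, hX.map_eval, variance_id_gaussianReal,
    NNReal.coe_one]

lemma integral_eval (hX : IsCenteredGaussianVec X R) (i : Fin n) : 𝔼[X i] = 0 := by
  have hmap := integral_map (hX.1 i).aemeasurable
    (aestronglyMeasurable_id (μ := (ℙ : Measure Ω).map (X i)))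
  rw [hX.map_eval] at hmap
  exact hmap.symm.trans integral_id_gaussianReal

-- `R` is only tested through its quadratic form, so just its symmetric part matters, and
-- `Real.toNNReal` truncates negative values of that form: hence the `max`.
lemma covariance_eval (hX : IsCenteredGaussianVec X R) (i j : Fin n) :
    cov[X i, X j] = max ((R i j + R j i) / 2) (-1) := by
  have : IsProbabilityMeasure (ℙ : Measure Ω) := hX.hasGaussianLaw.isProbabilityMeasure
  have hLp (k : Fin n) : MemLp (X k) 2 (ℙ : Measure Ω) := (hX.hasGaussianLaw.eval k).memLp_two
  have hsum : Var[X i + X j] = max (2 + R i j + R j i) 0 := by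
    rw [← variance_id_map ((hX.1 i).add (hX.1 j)).aemeasurable, Pi.add_def,
      hX.map_eval_add_eval, variance_id_gaussianReal, Real.coe_toNNReal']
  rw [variance_add (hLp i) (hLp j), hX.variance_eval, hX.variance_eval] at hsum
  grind

theorem measure_forall_mem_le_le (hX : IsCenteredGaussianVec X R) {ρ : ℝ} (hρ₀ : 0 ≤ ρ)
    (hρ₁ : ρ < 1) {J : Finset (Fin n)} (hJ : ∀ i ∈ J, ∀ j ∈ J, i ≠ j → R i j ≤ ρ) (u : ℝ) :
    (ℙ : Measure Ω) {ω | ∀ i ∈ J, X i ω ≤ u} ≤ ∫⁻ w, gaussianReal 0 1 (Set.Iic w) ^ J.card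
      ∂gaussianReal (u / √(1 - ρ)) (ρ / (1 - ρ)).toNNReal := by
  let Y : Ω → J → ℝ := fun ω i ↦ X i ω
  have hY : Measurable Y := measurable_pi_lambda _ fun i ↦ hX.1 i
  have hcoord (i : J) : AEStronglyMeasurable (fun y : J → ℝ ↦ y i) ((ℙ : Measure Ω).map Y) :=
    (measurable_pi_apply i).aestronglyMeasurable
  have hgauss : IsGaussian ((ℙ : Measure Ω).map Y) :=
    (hX.hasGaussianLaw.map (.pi fun i : J ↦ .proj (i : Fin n))).isGaussian_map
  have hcov (i j : J) :
      cov[fun y ↦ y i, fun y ↦ y j; (ℙ : Measure Ω).map Y] = cov[X i, X j] :=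
    covariance_map_fun (hcoord i) (hcoord j) hY.aemeasurable
  have hmean : ((ℙ : Measure Ω).map Y)[id] = 0 := by
    ext i
    rw [eval_integral fun k ↦ IsGaussian.integrable_id.eval k]
    exact (integral_map hY.aemeasurable (hcoord i)).trans (hX.integral_eval i)
  have hvar (i : J) : Var[fun y ↦ y i; (ℙ : Measure Ω).map Y] = 1 := by
    rw [← covariance_self (hcoord i).aemeasurable, hcov, covariance_self (hX.1 i).aemeasurable,
      hX.variance_eval]
  have hevent : {ω | ∀ i ∈ J, X i ω ≤ u} = Y ⁻¹' Set.Iic fun _ ↦ u := by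
    ext ω
    simp [Y, Pi.le_def]
  rw [hevent, ← Measure.map_apply hY measurableSet_Iic, ← Fintype.card_coe J]
  refine measure_Iic_const_le_of_covariance_le hmean hvar hρ₀ hρ₁ (fun i j hij ↦ ?_) u
  have hij' : (i : Fin n) ≠ j := Subtype.coe_injective.ne hij
  rw [hcov, hX.covariance_eval]
  refine max_le ?_ (by linarith)
  linarith [hJ i i.2 j j.2 hij', hJ j j.2 i i.2 hij'.symm]

end IsCenteredGaussianVec

/-! ### The integral over the common factor -/

lemma exists_mul_exp_le_gaussianReal_Ioi : ∃ c, 0 < c ∧ ∀ w : ℝ,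
    ENNReal.ofReal (c / (1 + |w|) * exp (-(w ^ 2 / 2))) ≤ gaussianReal 0 1 (Set.Ioi w) := by
  refine ⟨(√(2 * π))⁻¹ * exp (-(3 / 2)), by positivity, fun w ↦ ?_⟩
  set x := |w|
  set c := (√(2 * π))⁻¹ * exp (-(3 / 2))
  have hx : 0 ≤ x := abs_nonneg w
  have hpdf (y : ℝ) (hy : y ∈ Set.Ioc x (x + 1 / (1 + x))) :
      c * exp (-(x ^ 2 / 2)) ≤ gaussianPDFReal 0 1 y := by
    have hsq : y ^ 2 ≤ x ^ 2 + 3 := by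
      have hinv : 1 / (1 + x) ≤ 1 := by rw [div_le_one (by positivity)]; linarith
      have hmul : x * (1 / (1 + x)) ≤ 1 := by
        rw [mul_one_div, div_le_one (by positivity)]; linarith
      have hinv₀ : 0 ≤ 1 / (1 + x) := by positivity
      have := pow_le_pow_left₀ (hx.trans hy.1.le) hy.2 2
      nlinarith
    simp only [gaussianPDFReal_def, NNReal.coe_one, mul_one, sub_zero, c]
    rw [mul_assoc, ← Real.exp_add]
    gcongr
    linarith
  calc ENNReal.ofReal (c / (1 + x) * exp (-(w ^ 2 / 2)))
      = ENNReal.ofReal (c * exp (-(x ^ 2 / 2))) * volume (Set.Ioc x (x + 1 / (1 + x))) := by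
        rw [Real.volume_Ioc, ← ENNReal.ofReal_mul (by positivity), sq_abs]
        congr 1
        ring
    _ = ∫⁻ _ in Set.Ioc x (x + 1 / (1 + x)), ENNReal.ofReal (c * exp (-(x ^ 2 / 2))) := by
        rw [setLIntegral_const]
    _ ≤ ∫⁻ y in Set.Ioc x (x + 1 / (1 + x)), gaussianPDF 0 1 y :=
        setLIntegral_mono (measurable_gaussianPDF 0 1) fun y hy ↦
          ENNReal.ofReal_le_ofReal (hpdf y hy)
    _ = gaussianReal 0 1 (Set.Ioc x (x + 1 / (1 + x))) :=
        (gaussianReal_apply 0 one_ne_zero _).symm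
    _ ≤ gaussianReal 0 1 (Set.Ioi w) :=
        measure_mono (Set.Ioc_subset_Ioi_self.trans (Set.Ioi_subset_Ioi (le_abs_self w)))

lemma measure_pow_le_ofReal_exp {Ω : Type*} {mΩ : MeasurableSpace Ω} {μ : Measure Ω}
    [IsProbabilityMeasure μ] {s : Set Ω} (hs : MeasurableSet s) {q : ℝ} (hq₀ : 0 ≤ q)
    (hq : ENNReal.ofReal q ≤ μ sᶜ) (m : ℕ) : μ s ^ m ≤ ENNReal.ofReal (exp (-(m * q))) := by
  have hexp : μ s ≤ ENNReal.ofReal (exp (-q)) := calc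
    μ s = 1 - μ sᶜ := by rw [← prob_compl_eq_one_sub hs.compl, compl_compl]
    _ ≤ 1 - ENNReal.ofReal q := tsub_le_tsub_left hq _
    _ = ENNReal.ofReal (1 - q) := by rw [ENNReal.ofReal_sub _ hq₀, ENNReal.ofReal_one]
    _ ≤ ENNReal.ofReal (exp (-q)) := ENNReal.ofReal_le_ofReal (one_sub_le_exp_neg q)
  calc μ s ^ m ≤ ENNReal.ofReal (exp (-q)) ^ m := by gcongr
    _ = ENNReal.ofReal (exp (-(m * q))) := by
      rw [← ENNReal.ofReal_pow (by positivity), ← Real.exp_nat_mul, mul_neg]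

lemma exp_neg_le_rpow_mul_rpow_neg {p x : ℝ} (hp : 0 < p) (hx : 0 < x) :
    exp (-x) ≤ p ^ p * x ^ (-p) := by
  have hdiv : x / p ≤ exp (x / p) := by linarith [Real.add_one_le_exp (x / p)]
  have hpow : (x / p) ^ p ≤ exp x := calc
    (x / p) ^ p ≤ exp (x / p) ^ p := by gcongr
    _ = exp x := by rw [← Real.exp_mul, div_mul_cancel₀ _ hp.ne']
  calc exp (-x) = (exp x)⁻¹ := Real.exp_neg x
    _ ≤ ((x / p) ^ p)⁻¹ := by gcongr
    _ = p ^ p * x ^ (-p) := by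
      rw [Real.div_rpow hx.le hp.le, inv_div, Real.rpow_neg hx.le, div_eq_mul_inv]

lemma exists_gaussianReal_Iic_pow_le_exp : ∃ c, 0 < c ∧
    ∀ a : ℝ, 1 ≤ a → ∀ m : ℕ, (m : ℝ) = exp (a ^ 2 / 2) → ∀ w ≤ a,
      gaussianReal 0 1 (Set.Iic w) ^ m ≤ ENNReal.ofReal
        (exp (-(c / a * exp (a * (a - w) - (a - w) - (a - w) ^ 2 / 2)))) := by
  obtain ⟨c, hc, hmills⟩ := exists_mul_exp_le_gaussianReal_Ioi
  refine ⟨c / 2, by positivity, fun a ha m hm w hw ↦ ?_⟩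
  have hden : 1 + |w| ≤ 2 * a * exp (a - w) := calc
    1 + |w| ≤ 2 * a * (a - w + 1) := by cases abs_cases w <;> nlinarith
    _ ≤ 2 * a * exp (a - w) := by gcongr; exact Real.add_one_le_exp _
  have hexp : exp (a * (a - w) - (a - w) - (a - w) ^ 2 / 2) =
      exp (a ^ 2 / 2) * exp (-(w ^ 2 / 2)) / exp (a - w) := by
    rw [← Real.exp_add, ← Real.exp_sub]
    ring_nf
  have htail : c / 2 / a * exp (a * (a - w) - (a - w) - (a - w) ^ 2 / 2) ≤
      m * (c / (1 + |w|) * exp (-(w ^ 2 / 2))) := calc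
    _ = c / (2 * a * exp (a - w)) * (exp (a ^ 2 / 2) * exp (-(w ^ 2 / 2))) := by
      rw [hexp]; field_simp
    _ ≤ c / (1 + |w|) * (exp (a ^ 2 / 2) * exp (-(w ^ 2 / 2))) := by gcongr
    _ = m * (c / (1 + |w|) * exp (-(w ^ 2 / 2))) := by rw [hm]; ring
  calc gaussianReal 0 1 (Set.Iic w) ^ m
      ≤ ENNReal.ofReal (exp (-(m * (c / (1 + |w|) * exp (-(w ^ 2 / 2)))))) :=
        measure_pow_le_ofReal_exp measurableSet_Iic (by positivity)
          (by simpa only [Set.compl_Iic] using hmills w) m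
    _ ≤ _ := by gcongr

lemma exists_gaussianReal_Iic_pow_le_rpow {p : ℝ} (hp : 0 < p) : ∃ K, 0 < K ∧
    ∀ a : ℝ, 1 ≤ a → ∀ m : ℕ, (m : ℝ) = exp (a ^ 2 / 2) → ∀ w ≤ a,
      gaussianReal 0 1 (Set.Iic w) ^ m ≤ ENNReal.ofReal
        (K * a ^ p * exp (-(p * (a * (a - w) - (a - w) - (a - w) ^ 2 / 2)))) := by
  obtain ⟨c, hc, hpow⟩ := exists_gaussianReal_Iic_pow_le_exp
  refine ⟨p ^ p * c ^ (-p), by positivity, fun a ha m hm w hw ↦ ?_⟩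
  have ha₀ : 0 < a := by linarith
  refine (hpow a ha m hm w hw).trans (ENNReal.ofReal_le_ofReal ?_)
  set z := a * (a - w) - (a - w) - (a - w) ^ 2 / 2
  calc exp (-(c / a * exp z)) ≤ p ^ p * (c / a * exp z) ^ (-p) :=
        exp_neg_le_rpow_mul_rpow_neg hp (by positivity)
    _ = p ^ p * c ^ (-p) * a ^ p * exp (-(p * z)) := by
        rw [Real.mul_rpow (by positivity) (by positivity), Real.div_rpow hc.le ha₀.le,
          Real.rpow_neg ha₀.le, ← Real.exp_mul, div_inv_eq_mul]
        ring_nf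

lemma gaussianPDFReal_mul_eq (δ a : ℝ) {v : NNReal} (hv : v ≠ 0) (w : ℝ) :
    gaussianPDFReal (δ * a) v w = (√(2 * π * v))⁻¹ * exp (-((1 - δ) ^ 2 / v * (a ^ 2 / 2))) *
      exp ((1 - δ) / v * (a * (a - w)) - (a - w) ^ 2 / (2 * v)) := by
  have hv' : (v : ℝ) ≠ 0 := NNReal.coe_ne_zero.2 hv
  rw [gaussianPDFReal, mul_assoc _ (exp _), ← Real.exp_add]
  congr 2
  field_simp
  ring

lemma lintegral_Iic_ofReal_mul_exp (a t : ℝ) {A b : ℝ} (hA : 0 ≤ A) (hb : 0 < b) :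
    ∫⁻ w in Set.Iic (a - t), ENNReal.ofReal (A * exp (-(b * (a - w)))) =
      ENNReal.ofReal (A * (exp (-(b * t)) / b)) := by
  have hexp (w : ℝ) : exp (-(b * (a - w))) = exp (-(b * a)) * exp (b * w) := by
    rw [← Real.exp_add]; ring_nf
  simp only [hexp]
  rw [← ofReal_integral_eq_lintegral_ofReal
      (((integrableOn_exp_mul_Iic hb _).const_mul _).const_mul _)
      (.of_forall fun w ↦ by positivity),
    integral_const_mul, integral_const_mul, integral_exp_mul_Iic hb, mul_div_assoc',
    ← Real.exp_add]
  ring_nf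

lemma lintegral_Ioi_ofReal_mul_exp (a t : ℝ) {A b : ℝ} (hA : 0 ≤ A) (hb : 0 < b) :
    ∫⁻ w in Set.Ioi (a - t), ENNReal.ofReal (A * exp (b * (a - w))) =
      ENNReal.ofReal (A * (exp (b * t) / b)) := by
  have hexp (w : ℝ) : exp (b * (a - w)) = exp (b * a) * exp (-b * w) := by
    rw [← Real.exp_add]; ring_nf
  simp only [hexp]
  rw [← ofReal_integral_eq_lintegral_ofReal
      (((integrableOn_exp_mul_Ioi (neg_neg_of_pos hb) _).const_mul _).const_mul _)
      (.of_forall fun w ↦ by positivity),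
    integral_const_mul, integral_const_mul, integral_exp_mul_Ioi (neg_neg_of_pos hb),
    neg_div_neg_eq, mul_div_assoc', ← Real.exp_add]
  ring_nf

lemma setLIntegral_gaussianReal {m : ℝ} {v : NNReal} (hv : v ≠ 0) {s : Set ℝ}
    (hs : MeasurableSet s) {f : ℝ → ENNReal} (hf : Measurable f) :
    ∫⁻ w in s, f w ∂gaussianReal m v = ∫⁻ w in s, gaussianPDF m v w * f w := by
  rw [gaussianReal_of_var_ne_zero _ hv, restrict_withDensity hs,
    lintegral_withDensity_eq_lintegral_mul _ (measurable_gaussianPDF _ _) hf]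
  rfl

section TailIntegral

variable {δ : ℝ} {v : NNReal}

-- With `p = 1 / v - δ / (2 v)` the factor `exp (-p (a y - y - y² / 2))`, `y = a - w`, beats the
-- growth `exp ((1 - δ) / v * a y)` of the density by `exp (-δ / (2 v) * a y)`, while the
-- `y²` terms keep a negative sign.
lemma exists_gaussianPDF_mul_gaussianReal_Iic_pow_le (hδ₀ : 0 < δ) (hδ₁ : δ < 1) (hv : v ≠ 0) :
    ∃ K, 0 < K ∧ ∀ a : ℝ, 1 ≤ a → ∀ m : ℕ, (m : ℝ) = exp (a ^ 2 / 2) → ∀ w ≤ a,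
      gaussianPDF (δ * a) v w * gaussianReal 0 1 (Set.Iic w) ^ m ≤ ENNReal.ofReal
        (K * exp (-((1 - δ) ^ 2 / v * (a ^ 2 / 2))) * a ^ ((1 - δ) / v + δ / (2 * v)) *
          exp (-(δ / (2 * v) * a * (a - w)))) := by
  have hv₀ : (0 : ℝ) < v := NNReal.coe_pos.2 (pos_iff_ne_zero.2 hv)
  set κ := δ / (2 * v) with hκ
  set p := (1 - δ) / v + κ with hp
  have hκ₀ : 0 < κ := by positivity
  have hβ₀ : 0 < (1 - δ) / v := div_pos (sub_pos.2 hδ₁) hv₀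
  have hp₀ : 0 < p := add_pos hβ₀ hκ₀
  obtain ⟨K, hK, hpow⟩ := exists_gaussianReal_Iic_pow_le_rpow hp₀
  refine ⟨(√(2 * π * v))⁻¹ * K * exp (p ^ 2 / (2 * κ)), by positivity, fun a ha m hm w hw ↦ ?_⟩
  have : 0 < a := by linarith
  have hexponent : (1 - δ) / v * (a * (a - w)) - (a - w) ^ 2 / (2 * v) +
      -(p * (a * (a - w) - (a - w) - (a - w) ^ 2 / 2)) ≤
        p ^ 2 / (2 * κ) + -(κ * a * (a - w)) := by
    have hsq : p ^ 2 / (2 * κ) + -(κ * a * (a - w)) - ((1 - δ) / v * (a * (a - w)) -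
        (a - w) ^ 2 / (2 * v) + -(p * (a * (a - w) - (a - w) - (a - w) ^ 2 / 2))) =
          (p - κ * (a - w)) ^ 2 / (2 * κ) := by
      rw [hp, hκ]
      field_simp
      ring
    have : 0 ≤ (p - κ * (a - w)) ^ 2 / (2 * κ) := by positivity
    linarith
  refine (mul_le_mul_right (hpow a ha m hm w hw) _).trans ?_
  rw [gaussianPDF, ← ENNReal.ofReal_mul (gaussianPDFReal_nonneg _ _ _),
    gaussianPDFReal_mul_eq δ a hv]
  refine ENNReal.ofReal_le_ofReal ?_
  set E := exp (-((1 - δ) ^ 2 / v * (a ^ 2 / 2)))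
  calc _ = (√(2 * π * v))⁻¹ * K * E * a ^ p *
        exp ((1 - δ) / v * (a * (a - w)) - (a - w) ^ 2 / (2 * v) +
          -(p * (a * (a - w) - (a - w) - (a - w) ^ 2 / 2))) := by rw [Real.exp_add]; ring
    _ ≤ (√(2 * π * v))⁻¹ * K * E * a ^ p * exp (p ^ 2 / (2 * κ) + -(κ * a * (a - w))) := by gcongr
    _ = _ := by rw [Real.exp_add]; ring

lemma exists_setLIntegral_Iic_gaussianReal_Iic_pow_le (hδ₀ : 0 < δ) (hδ₁ : δ < 1) (hv : v ≠ 0) :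
    ∃ K, 0 < K ∧ ∀ a : ℝ, 1 ≤ a → ∀ m : ℕ, (m : ℝ) = exp (a ^ 2 / 2) →
      ∫⁻ w in Set.Iic (a - log a / a), gaussianReal 0 1 (Set.Iic w) ^ m ∂gaussianReal (δ * a) v ≤
        ENNReal.ofReal
          (K * (exp (-((1 - δ) ^ 2 / v * (a ^ 2 / 2))) * a ^ ((1 - δ) / v - 1))) := by
  have : (0 : ℝ) < v := NNReal.coe_pos.2 (pos_iff_ne_zero.2 hv)
  obtain ⟨K, hK, hbound⟩ := exists_gaussianPDF_mul_gaussianReal_Iic_pow_le hδ₀ hδ₁ hv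
  set κ := δ / (2 * v)
  have : 0 < κ := by positivity
  refine ⟨K / κ, by positivity, fun a ha m hm ↦ ?_⟩
  have ha₀ : 0 < a := by linarith
  set β := (1 - δ) / v
  set E := exp (-((1 - δ) ^ 2 / v * (a ^ 2 / 2)))
  have hsplit : exp (-(κ * a * (log a / a))) = a ^ (-κ) := by
    rw [Real.rpow_def_of_pos ha₀]
    field_simp
  have hrpow : a ^ (β + κ) * a ^ (-κ) = a ^ (β - 1) * a := by
    rw [← Real.rpow_add ha₀, ← Real.rpow_add_one ha₀.ne']
    ring_nf
  calc _ = ∫⁻ w in Set.Iic (a - log a / a),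
          gaussianPDF (δ * a) v w * gaussianReal 0 1 (Set.Iic w) ^ m :=
        setLIntegral_gaussianReal hv measurableSet_Iic (measurable_gaussianReal_Iic.pow_const m)
    _ ≤ ∫⁻ w in Set.Iic (a - log a / a),
          ENNReal.ofReal (K * E * a ^ (β + κ) * exp (-(κ * a * (a - w)))) :=
        setLIntegral_mono (by fun_prop) fun w hw ↦ hbound a ha m hm w <|
          hw.trans (sub_le_self _ (div_nonneg (log_nonneg ha) ha₀.le))
    _ = ENNReal.ofReal (K * E * a ^ (β + κ) * (exp (-(κ * a * (log a / a))) / (κ * a))) :=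
        lintegral_Iic_ofReal_mul_exp _ _ (by positivity) (by positivity)
    _ = ENNReal.ofReal (K / κ * (E * a ^ (β - 1))) := by
        rw [hsplit, mul_div_assoc', mul_assoc (K * E), hrpow]
        field_simp

lemma exists_setLIntegral_Ioi_gaussianReal_Iic_pow_le (hδ₁ : δ < 1) (hv : v ≠ 0) :
    ∃ K, 0 < K ∧ ∀ a : ℝ, 0 < a → ∀ m : ℕ,
      ∫⁻ w in Set.Ioi (a - log a / a), gaussianReal 0 1 (Set.Iic w) ^ m ∂gaussianReal (δ * a) v ≤
        ENNReal.ofReal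
          (K * (exp (-((1 - δ) ^ 2 / v * (a ^ 2 / 2))) * a ^ ((1 - δ) / v - 1))) := by
  have hv₀ : (0 : ℝ) < v := NNReal.coe_pos.2 (pos_iff_ne_zero.2 hv)
  set β := (1 - δ) / v
  have : 0 < β := div_pos (sub_pos.2 hδ₁) hv₀
  set D := (√(2 * π * v))⁻¹
  refine ⟨D / β, by positivity, fun a ha m ↦ ?_⟩
  set E := exp (-((1 - δ) ^ 2 / v * (a ^ 2 / 2)))
  have hpdf (w : ℝ) : gaussianPDFReal (δ * a) v w ≤ D * E * exp (β * a * (a - w)) := by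
    rw [gaussianPDFReal_mul_eq δ a hv, mul_assoc β]
    gcongr
    exact sub_le_self _ (by positivity)
  have hsplit : exp (β * a * (log a / a)) = a ^ (β - 1) * a := by
    rw [← Real.rpow_add_one ha.ne', sub_add_cancel, Real.rpow_def_of_pos ha]
    field_simp
  calc _ = ∫⁻ w in Set.Ioi (a - log a / a),
          gaussianPDF (δ * a) v w * gaussianReal 0 1 (Set.Iic w) ^ m :=
        setLIntegral_gaussianReal hv measurableSet_Ioi (measurable_gaussianReal_Iic.pow_const m)
    _ ≤ ∫⁻ w in Set.Ioi (a - log a / a), ENNReal.ofReal (D * E * exp (β * a * (a - w))) :=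
        setLIntegral_mono (by fun_prop) fun w _ ↦
          (mul_le_of_le_one_right' (pow_le_one' prob_le_one m)).trans
            (ENNReal.ofReal_le_ofReal (hpdf w))
    _ = ENNReal.ofReal (D * E * (exp (β * a * (log a / a)) / (β * a))) :=
        lintegral_Ioi_ofReal_mul_exp _ _ (by positivity) (by positivity)
    _ = ENNReal.ofReal (D / β * (E * a ^ (β - 1))) := by
        rw [hsplit]
        field_simp

lemma exists_lintegral_gaussianReal_Iic_pow_le_exp (hδ₀ : 0 < δ) (hδ₁ : δ < 1) (hv : v ≠ 0) :
    ∃ C, 0 < C ∧ ∀ a : ℝ, 1 ≤ a → ∀ m : ℕ, (m : ℝ) = exp (a ^ 2 / 2) →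
      ∫⁻ w, gaussianReal 0 1 (Set.Iic w) ^ m ∂gaussianReal (δ * a) v ≤ ENNReal.ofReal
        (C * (exp (-((1 - δ) ^ 2 / v * (a ^ 2 / 2))) * a ^ ((1 - δ) / v - 1))) := by
  obtain ⟨K, hK, hlower⟩ := exists_setLIntegral_Iic_gaussianReal_Iic_pow_le hδ₀ hδ₁ hv
  obtain ⟨L, hL, hupper⟩ := exists_setLIntegral_Ioi_gaussianReal_Iic_pow_le hδ₁ hv
  refine ⟨K + L, by positivity, fun a ha m hm ↦ ?_⟩
  have ha₀ : 0 < a := by linarith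
  rw [← lintegral_add_compl _ (measurableSet_Iic (a := a - log a / a)), Set.compl_Iic, add_mul,
    ENNReal.ofReal_add (by positivity) (by positivity)]
  exact add_le_add (hlower a ha m hm) (hupper a ha₀ m)

theorem exists_lintegral_gaussianReal_Iic_pow_le (hδ₀ : 0 < δ) (hδ₁ : δ < 1) (hv : v ≠ 0) :
    ∃ C, 0 < C ∧ ∀ m : ℕ, 2 ≤ m →
      ∫⁻ w, gaussianReal 0 1 (Set.Iic w) ^ m ∂gaussianReal (δ * √(2 * log m)) v ≤ ENNReal.ofReal
        (C * (m : ℝ) ^ (-((1 - δ) ^ 2 / v)) * log m ^ (((1 - δ) / v - 1) / 2)) := by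
  obtain ⟨C, hC, hbound⟩ := exists_lintegral_gaussianReal_Iic_pow_le_exp hδ₀ hδ₁ hv
  set β := (1 - δ) / v
  refine ⟨C * 2 ^ ((β - 1) / 2), by positivity, fun m hm ↦ ?_⟩
  have hm₀ : (0 : ℝ) < m := by positivity
  have hlog : 1 ≤ 2 * log m := by
    have : log 2 ≤ log m := log_le_log two_pos (by exact_mod_cast hm)
    linarith [Real.log_two_gt_d9]
  have hsq : √(2 * log m) ^ 2 / 2 = log m := by
    rw [Real.sq_sqrt (by linarith), mul_div_cancel_left₀ _ two_ne_zero]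
  have hrpow : √(2 * log m) ^ (β - 1) = 2 ^ ((β - 1) / 2) * log m ^ ((β - 1) / 2) := by
    rw [← Real.mul_rpow zero_le_two (by linarith), Real.sqrt_eq_rpow, ← Real.rpow_mul (by linarith)]
    ring_nf
  refine (hbound _ (Real.one_le_sqrt.2 hlog) m (by rw [hsq, Real.exp_log hm₀])).trans_eq ?_
  rw [hsq, hrpow, Real.rpow_def_of_pos hm₀]
  ring_nf

end TailIntegral

theorem lower_tail_bound_on_subset (δ₀ ρt₀ : ℝ)
    (hδ : δ₀ ∈ Set.Ioo (0 : ℝ) 1) (hρ : ρt₀ ∈ Set.Ioo (0 : ℝ) 1) :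
    ∃ C : ℝ, 0 < C ∧
      ∀ (Ω : Type) [MeasureSpace Ω], IsProbabilityMeasure (ℙ : Measure Ω) →
        ∀ (n : ℕ) (X : Fin n → Ω → ℝ) (R : Matrix (Fin n) (Fin n) ℝ),
          IsCenteredGaussianVec X R →
          ∀ (J : Finset (Fin n)), 2 ≤ J.card →
            (∀ i ∈ J, ∀ j ∈ J, i ≠ j → R i j ≤ ρt₀) →
            (ℙ : Measure Ω) {ω | (⨆ i, X i ω)
                ≤ δ₀ * Real.sqrt (2 * (1 - ρt₀) * Real.log (J.card : ℝ))}
              ≤ ENNReal.ofReal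
                  (C * (J.card : ℝ) ^ (-((1 - ρt₀) * (1 - δ₀) ^ 2 / ρt₀))
                    * Real.log (J.card : ℝ) ^ (((1 - ρt₀) * (1 - δ₀) / ρt₀ - 1) / 2)) := by
  obtain ⟨hδ₀, hδ₁⟩ := hδ
  obtain ⟨hρ₀, hρ₁⟩ := hρ
  have hρc : 0 < 1 - ρt₀ := sub_pos.2 hρ₁
  have hv : 0 < ρt₀ / (1 - ρt₀) := div_pos hρ₀ hρc
  obtain ⟨C, hC, hbound⟩ :=
    exists_lintegral_gaussianReal_Iic_pow_le hδ₀ hδ₁ (Real.toNNReal_pos.2 hv).ne'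
  refine ⟨C, hC, fun Ω _ _ n X R hX J hJ hR ↦ ?_⟩
  have hthreshold : δ₀ * √(2 * (1 - ρt₀) * log J.card) / √(1 - ρt₀) = δ₀ * √(2 * log J.card) := by
    rw [mul_right_comm, Real.sqrt_mul' _ hρc.le, ← mul_assoc,
      mul_div_cancel_right₀ _ (Real.sqrt_pos.2 hρc).ne']
  have hmax_le : {ω | (⨆ i, X i ω) ≤ δ₀ * √(2 * (1 - ρt₀) * log J.card)} ⊆
      {ω | ∀ i ∈ J, X i ω ≤ δ₀ * √(2 * (1 - ρt₀) * log J.card)} := fun ω hω i _ ↦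
    (le_ciSup (f := fun i ↦ X i ω) (Set.finite_range _).bddAbove i).trans hω
  refine (measure_mono hmax_le).trans ((hX.measure_forall_mem_le_le hρ₀.le hρ₁ hR _).trans ?_)
  rw [hthreshold, mul_comm (1 - ρt₀), mul_comm (1 - ρt₀), ← div_div_eq_mul_div,
    ← div_div_eq_mul_div]
  simpa only [Real.coe_toNNReal _ hv.le] using hbound J.card hJ
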